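/- Let n ≥ 2 and −∞ < μ < 1/4. Suppose h is a positive L_μ-harmonic function on ℝⁿ₊ which is axially symmetric, homogeneous of some degree γ ∈ ℝ, and belongs to the class H_{μ,0}: for every R > 1 there exist c > 0 and δ > 0 such that c⁻¹ x₁^{α₊} ≤ h(x) ≤ c x₁^{α₊} whenever R⁻¹ ≤ |x| ≤ R and 0 < x₁ < δ. Then there exists λ > 0 such that either h(x) = λ x₁^{α₊} for all x ∈ ℝⁿ₊, or h(x) = λ x₁^{α₊} |x|^{−(n−2+2α₊)} for all x ∈ ℝⁿ₊. -/

import Mathlib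

open Real Set

noncomputable def lap {n : ℕ} (u : EuclideanSpace ℝ (Fin n) → ℝ)
    (x : EuclideanSpace ℝ (Fin n)) : ℝ :=
  ∑ i : Fin n, iteratedFDeriv ℝ 2 u x ![EuclideanSpace.single i 1, EuclideanSpace.single i 1]

noncomputable def x1 {n : ℕ} (x : EuclideanSpace ℝ (Fin n)) : ℝ :=
  if h : 0 < n then x ⟨0, h⟩ else 0

def halfSpace (n : ℕ) : Set (EuclideanSpace ℝ (Fin n)) := {x | 0 < x1 x}

noncomputable def aPlus (μ : ℝ) : ℝ := 1 / 2 + Real.sqrt (1 / 4 - μ)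

noncomputable def aMinus (μ : ℝ) : ℝ := 1 / 2 - Real.sqrt (1 / 4 - μ)

noncomputable def Lam (n : ℕ) (s : ℝ) : ℝ := s * (s + n - 2)


lemma const_aux (f : ℝ → ℝ) (b : ℝ) (hf : ContinuousOn f (Ico 0 b))
    (hd : ∀ t ∈ Ioo 0 b, HasDerivAt f 0 t) : ∀ t ∈ Ico 0 b, f t = f 0 := by
  intro t ht
  have h0 : (0 : ℝ) ∈ Ico 0 b := ⟨le_rfl, ht.1.trans_lt ht.2⟩
  have hdiff : DifferentiableOn ℝ f (interior (Ico 0 b)) := by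
    rw [interior_Ico]
    exact fun t ht => (hd t ht).differentiableAt.differentiableWithinAt
  apply le_antisymm
  · refine antitoneOn_of_deriv_nonpos (convex_Ico _ _) hf hdiff ?_ h0 ht ht.1
    rw [interior_Ico]
    exact fun t ht => (hd t ht).deriv.le
  · refine monotoneOn_of_deriv_nonneg (convex_Ico _ _) hf hdiff ?_ h0 ht ht.1
    rw [interior_Ico]
    exact fun t ht => (hd t ht).deriv.ge

lemma ode_aux (m : ℕ) (μ γ α : ℝ) (hα : 1 / 2 < α) (hα2 : α ^ 2 - α + μ = 0)
    (u u' u'' : ℝ → ℝ)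
    (hu : ∀ θ ∈ Ico 0 (π / 2), HasDerivAt u (u' θ) θ)
    (hu' : ∀ θ ∈ Ico 0 (π / 2), HasDerivAt u' (u'' θ) θ)
    (h0 : u' 0 = 0)
    (hpos : ∀ θ ∈ Ico 0 (π / 2), 0 < u θ)
    (hode : ∀ θ ∈ Ioo 0 (π / 2), u'' θ * sin θ + m * cos θ * u' θ + γ * (γ + m) * sin θ * u θ
      + μ / (cos θ) ^ 2 * sin θ * u θ = 0)
    (hbd : ∃ c : ℝ, ∃ δ > 0, ∀ θ ∈ Ioo 0 (π / 2), cos θ < δ → u θ ≤ c * cos θ ^ α) :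
    (γ = α ∨ γ = - (m + α)) ∧ ∃ C > 0, ∀ θ ∈ Ico 0 (π / 2), u θ = C * cos θ ^ α := by
  have hpi := Real.pi_pos
  have hcos : ∀ θ ∈ Ico 0 (π / 2), 0 < cos θ := fun θ hθ =>
    Real.cos_pos_of_mem_Ioo ⟨by linarith [hθ.1], hθ.2⟩
  have hsin : ∀ θ ∈ Ioo 0 (π / 2), 0 < sin θ := fun θ hθ =>
    Real.sin_pos_of_pos_of_lt_pi hθ.1 (by linarith [hθ.2])
  have hI : ∀ θ ∈ Ioo 0 (π / 2), θ ∈ Ico 0 (π / 2) := fun θ hθ => ⟨hθ.1.le, hθ.2⟩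
  -- derivative of cos^α
  have hP : ∀ θ ∈ Ico 0 (π / 2),
      HasDerivAt (fun θ => cos θ ^ α) (-α * cos θ ^ α * (sin θ / cos θ)) θ := by
    intro θ hθ
    have hc := hcos θ hθ
    have := (Real.hasDerivAt_cos θ).rpow_const (p := α) (Or.inl hc.ne')
    convert this using 1
    rw [Real.rpow_sub_one hc.ne']
    field_simp
  have hT : ∀ θ ∈ Ico 0 (π / 2),
      HasDerivAt (fun θ => sin θ / cos θ) (1 / cos θ ^ 2) θ := by
    intro θ hθ
    have hc := hcos θ hθ
    have := (Real.hasDerivAt_sin θ).div (Real.hasDerivAt_cos θ) hc.ne'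
    refine this.congr_deriv ?_
    rw [← Real.sin_sq_add_cos_sq θ]; ring
  set K : ℝ := (γ - α) * (γ + (m + α)) with hK
  let F : ℝ → ℝ := fun θ => sin θ ^ m * cos θ ^ α * (u' θ + α * (sin θ / cos θ) * u θ)
  let G : ℝ → ℝ := fun θ => u θ / cos θ ^ α
  have hFd : ∀ θ ∈ Ico 0 (π / 2), HasDerivAt F
      ((m * sin θ ^ (m - 1) * cos θ * cos θ ^ α + sin θ ^ m * (-α * cos θ ^ α * (sin θ / cos θ)))
        * (u' θ + α * (sin θ / cos θ) * u θ)
        + sin θ ^ m * cos θ ^ α * (u'' θ + ((α * (1 / cos θ ^ 2)) * u θ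
          + α * (sin θ / cos θ) * u' θ))) θ := by
    intro θ hθ
    exact (((Real.hasDerivAt_sin θ).pow m).mul (hP θ hθ)).mul
      ((hu' θ hθ).add (((hT θ hθ).const_mul α).mul (hu θ hθ)))
  have hF : ∀ θ ∈ Ioo 0 (π / 2), HasDerivAt F (-K * (sin θ ^ m * cos θ ^ α * u θ)) θ := by
    intro θ hθ
    convert hFd θ (hI θ hθ) using 1
    have hs := hsin θ hθ
    have hc := hcos θ (hI θ hθ)
    have e1 : (m : ℝ) * sin θ ^ (m - 1) = m * sin θ ^ m / sin θ := by
      rcases m with _ | k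
      · simp
      · simp only [Nat.add_sub_cancel]; field_simp; ring
    rw [e1]
    have hode1 := hode θ hθ
    have hμ : μ = α - α ^ 2 := by linarith
    have e2 : u'' θ = -(m * cos θ * u' θ / sin θ + γ * (γ + m) * u θ
        + μ / (cos θ) ^ 2 * u θ) := by
      field_simp
      field_simp at hode1
      linarith
    rw [e2, hμ, hK]
    have hs2 : cos θ ^ 2 = 1 - sin θ ^ 2 := by rw [← Real.sin_sq_add_cos_sq θ]; ring
    field_simp
    rw [hs2]
    ring
  have hG : ∀ θ ∈ Ioo 0 (π / 2), HasDerivAt G (F θ / (sin θ ^ m * (cos θ ^ α) ^ 2)) θ := by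
    intro θ hθ
    have hs := hsin θ hθ
    have hc := hcos θ (hI θ hθ)
    have hp : 0 < cos θ ^ α := Real.rpow_pos_of_pos hc _
    have := (hu θ (hI θ hθ)).div (hP θ (hI θ hθ)) hp.ne'
    refine this.congr_deriv ?_
    simp only [F]
    field_simp
    ring
  have hF0 : F 0 = 0 := by simp [F, h0]
  have hFc : ContinuousOn F (Ico 0 (π / 2)) := fun θ hθ =>
    (hFd θ hθ).continuousAt.continuousWithinAt
  have hKz : K = 0 := by
    by_contra hKne
    obtain ⟨ε, hε1, hεK⟩ : ∃ ε : ℝ, |ε| ≤ 1 ∧ 0 < ε * (-K) := by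
      rcases lt_or_gt_of_ne hKne with h | h
      · exact ⟨1, by simp, by linarith⟩
      · exact ⟨-1, by simp, by linarith⟩
    have hmono : StrictMonoOn (fun θ => ε * F θ) (Ico 0 (π / 2)) := by
      apply strictMonoOn_of_deriv_pos (convex_Ico _ _) (continuousOn_const.mul hFc)
      intro θ hθ
      rw [interior_Ico] at hθ
      refine lt_of_lt_of_eq ?_ ((hF θ hθ).const_mul ε).deriv.symm
      rw [← mul_assoc]
      have hs := hsin θ hθ
      have hp : 0 < cos θ ^ α := Real.rpow_pos_of_pos (hcos θ (hI θ hθ)) _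
      have := hpos θ (hI θ hθ)
      positivity
    set c0 := ε * F (π / 4) with hc0
    have hc0pos : 0 < c0 := by
      have := hmono (a := 0) (b := π / 4) ⟨le_rfl, by linarith⟩ ⟨by linarith, by linarith⟩
        (by linarith)
      simpa [hF0] using this
    have hsub : ∀ θ ∈ Ico (π / 4) (π / 2), θ ∈ Ioo 0 (π / 2) := fun θ hθ =>
      ⟨by linarith [hθ.1], hθ.2⟩
    have hLd : ∀ θ ∈ Ico (π / 4) (π / 2), HasDerivAt (fun θ => ε * G θ + c0 * Real.log (cos θ))
        (ε * (F θ / (sin θ ^ m * (cos θ ^ α) ^ 2)) + c0 * (-sin θ / cos θ)) θ := by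
      intro θ hθ
      have hθ' := hsub θ hθ
      exact ((hG θ hθ').const_mul ε).add
        (((Real.hasDerivAt_cos θ).log (hcos θ (hI θ hθ')).ne').const_mul c0)
    have hL : MonotoneOn (fun θ => ε * G θ + c0 * Real.log (cos θ)) (Ico (π / 4) (π / 2)) := by
      apply monotoneOn_of_deriv_nonneg (convex_Ico _ _)
      · exact fun θ hθ => (hLd θ hθ).continuousAt.continuousWithinAt
      · intro θ hθ
        exact (hLd θ (interior_subset hθ)).differentiableAt.differentiableWithinAt
      · intro θ hθ
        have hθ1 := interior_subset hθ
        rw [(hLd θ hθ1).deriv]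
        have hθ2 := hsub θ hθ1
        have hs := hsin θ hθ2
        have hc := hcos θ (hI θ hθ2)
        have hp : 0 < cos θ ^ α := Real.rpow_pos_of_pos hc _
        have hFge : c0 ≤ ε * F θ := hmono.monotoneOn ⟨by linarith, by linarith⟩ (hI θ hθ2) hθ1.1
        have hsm : sin θ ^ m ≤ 1 := pow_le_one₀ hs.le (Real.sin_le_one θ)
        have hpc : (cos θ ^ α) ^ 2 ≤ cos θ := by
          rw [← Real.rpow_natCast, ← Real.rpow_mul hc.le]
          calc cos θ ^ (α * (2 : ℕ)) ≤ cos θ ^ (1 : ℝ) :=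
                Real.rpow_le_rpow_of_exponent_ge hc (Real.cos_le_one θ) (by push_cast; linarith)
            _ = cos θ := Real.rpow_one _
        have hden : sin θ ^ m * (cos θ ^ α) ^ 2 ≤ cos θ := by
          calc sin θ ^ m * (cos θ ^ α) ^ 2 ≤ 1 * cos θ := by gcongr
            _ = cos θ := one_mul _
        have h1 : c0 / cos θ ≤ ε * F θ / (sin θ ^ m * (cos θ ^ α) ^ 2) :=
          div_le_div₀ (hc0pos.le.trans hFge) hFge (by positivity) hden
        have h2 : c0 * sin θ / cos θ ≤ c0 / cos θ := by
          gcongr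
          have := Real.sin_le_one θ
          nlinarith
        have h3 : c0 * (-sin θ / cos θ) = - (c0 * sin θ / cos θ) := by ring
        rw [h3, ← mul_div_assoc]
        linarith
    obtain ⟨c, δ, hδ, hb⟩ := hbd
    have hlog : Filter.Tendsto (fun θ => Real.log (cos θ)) (nhdsWithin (π / 2) (Iio (π / 2)))
        Filter.atBot := Real.tendsto_log_nhdsGT_zero.comp Real.tendsto_cos_pi_div_two
    have hcs : Filter.Tendsto cos (nhdsWithin (π / 2) (Iio (π / 2))) (nhds 0) :=
      Real.tendsto_cos_pi_div_two.mono_right nhdsWithin_le_nhds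
    set L0 := ε * G (π / 4) + c0 * Real.log (cos (π / 4)) with hL0
    have ev1 := hlog.eventually (Filter.eventually_lt_atBot ((L0 - c) / c0))
    have ev2 := hcs.eventually (gt_mem_nhds hδ)
    have ev3 : ∀ᶠ θ in nhdsWithin (π / 2) (Iio (π / 2)), θ ∈ Ioo (π / 4) (π / 2) :=
      Ioo_mem_nhdsLT (by linarith)
    obtain ⟨θ, ⟨h1, h2⟩, h3⟩ := ((ev1.and ev2).and ev3).exists
    have hθ1 : θ ∈ Ico (π / 4) (π / 2) := ⟨h3.1.le, h3.2⟩
    have hθ2 := hsub θ hθ1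
    have hp : 0 < cos θ ^ α := Real.rpow_pos_of_pos (hcos θ (hI θ hθ2)) _
    have hm := hL (a := π / 4) ⟨le_rfl, by linarith⟩ hθ1 h3.1.le
    simp only at hm
    have hGc : G θ ≤ c := by
      simp only [G]; rw [div_le_iff₀ hp]; exact hb θ hθ2 h2
    have hGp : 0 < G θ := div_pos (hpos θ (hI θ hθ2)) hp
    have hεG : ε * G θ ≤ c := by
      have := (abs_le.1 hε1).2
      nlinarith
    rw [lt_div_iff₀ hc0pos] at h1
    linarith
  constructor
  · rcases mul_eq_zero.1 hKz with h | h
    · left; linarith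
    · right; linarith
  have hFz : ∀ θ ∈ Ioo 0 (π / 2), F θ = 0 := by
    intro θ hθ
    rw [const_aux F (π / 2) hFc (fun t ht => by simpa [hKz] using hF t ht) θ (hI θ hθ), hF0]
  have hGc : ContinuousOn G (Ico 0 (π / 2)) := fun θ hθ =>
    ((hu θ hθ).continuousAt.div (hP θ hθ).continuousAt
      (Real.rpow_pos_of_pos (hcos θ hθ) _).ne').continuousWithinAt
  have h00 : (0 : ℝ) ∈ Ico 0 (π / 2) := ⟨le_rfl, by linarith⟩
  refine ⟨G 0, div_pos (hpos 0 h00) (Real.rpow_pos_of_pos (hcos 0 h00) _), ?_⟩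
  intro θ hθ
  rw [← const_aux G (π / 2) hGc (fun t ht => by simpa [hFz t ht] using hG t ht) θ hθ]
  have hp : 0 < cos θ ^ α := Real.rpow_pos_of_pos (hcos θ hθ) _
  simp only [G]
  field_simp

section helpers
variable {E : Type*} [NormedAddCommGroup E] [NormedSpace ℝ E]

lemma fd1_aux {s : Set E} (hs : IsOpen s) {h : E → ℝ} (hC : ContDiffOn ℝ 2 h s) {x : E}
    (hx : x ∈ s) : HasFDerivAt h (fderiv ℝ h x) x :=
  ((hC.contDiffAt (hs.mem_nhds hx)).differentiableAt (by norm_num)).hasFDerivAt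

lemma fd2_aux {s : Set E} (hs : IsOpen s) {h : E → ℝ} (hC : ContDiffOn ℝ 2 h s) {x : E}
    (hx : x ∈ s) : HasFDerivAt (fderiv ℝ h) (fderiv ℝ (fderiv ℝ h) x) x :=
  (((hC.contDiffAt (hs.mem_nhds hx)).fderiv_right (m := 1) (by norm_num)).differentiableAt
    (by norm_num)).hasFDerivAt

lemma cv1_aux {s : Set E} (hs : IsOpen s) {h : E → ℝ} (hC : ContDiffOn ℝ 2 h s)
    {c : ℝ → E} {v : E} {t : ℝ} (hx : c t ∈ s) (hc : HasDerivAt c v t) :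
    HasDerivAt (fun t => h (c t)) (fderiv ℝ h (c t) v) t :=
  (fd1_aux hs hC hx).comp_hasDerivAt t hc

lemma cv2_aux {s : Set E} (hs : IsOpen s) {h : E → ℝ} (hC : ContDiffOn ℝ 2 h s)
    {c v : ℝ → E} {a : E} {t : ℝ} (hx : c t ∈ s) (hc : HasDerivAt c (v t) t)
    (hv : HasDerivAt v a t) :
    HasDerivAt (fun t => fderiv ℝ h (c t) (v t))
      (fderiv ℝ (fderiv ℝ h) (c t) (v t) (v t) + fderiv ℝ h (c t) a) t :=
  ((fd2_aux hs hC hx).comp_hasDerivAt t hc).clm_apply hv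

/-- first and second derivatives along rays of a homogeneous function -/
lemma hom_aux {s : Set E} (hs : IsOpen s) {h : E → ℝ} (hC : ContDiffOn ℝ 2 h s)
    (hcone : ∀ l : ℝ, 0 < l → ∀ x ∈ s, l • x ∈ s) (γ : ℝ)
    (hhom : ∀ l : ℝ, 0 < l → ∀ x ∈ s, h (l • x) = l ^ γ * h x) {x : E} (hx : x ∈ s) :
    fderiv ℝ h x x = γ * h x ∧ fderiv ℝ (fderiv ℝ h) x x x = γ * (γ - 1) * h x := by
  have hc : ∀ t : ℝ, HasDerivAt (fun t : ℝ => t • x) x t := fun t => by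
    simpa using (hasDerivAt_id t).smul_const x
  have h1 : ∀ t : ℝ, 0 < t → fderiv ℝ h (t • x) x = γ * t ^ (γ - 1) * h x := by
    intro t ht
    have a1 := cv1_aux hs hC (c := fun t : ℝ => t • x) (t := t) (hcone t ht x hx) (hc t)
    have a2 : HasDerivAt (fun t : ℝ => t ^ γ * h x) (γ * t ^ (γ - 1) * h x) t :=
      (Real.hasDerivAt_rpow_const (Or.inl ht.ne')).mul_const _
    refine a1.unique (a2.congr_of_eventuallyEq ?_)
    filter_upwards [lt_mem_nhds ht] with r hr using hhom r hr x hx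
  have a1 := cv2_aux hs hC (c := fun t : ℝ => t • x) (v := fun _ => x) (t := 1)
    (by simpa using hx) (hc 1) (hasDerivAt_const 1 x)
  have a2 : HasDerivAt (fun t : ℝ => γ * t ^ (γ - 1) * h x)
      (γ * ((γ - 1) * 1 ^ (γ - 1 - 1)) * h x) 1 :=
    ((Real.hasDerivAt_rpow_const (Or.inl one_ne_zero)).const_mul _).mul_const _
  have a3 := a1.unique (a2.congr_of_eventuallyEq (by
    filter_upwards [lt_mem_nhds (zero_lt_one' ℝ)] with r hr using h1 r hr))
  constructor
  · simpa using h1 1 one_pos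
  · simp at a3
    rw [a3]

/-- second derivative along a circle on which the function is constant -/
lemma circ_aux {s : Set E} (hs : IsOpen s) {h : E → ℝ} (hC : ContDiffOn ℝ 2 h s)
    (p e f : E) (b : ℝ)
    (hmem : ∀ φ : ℝ, p + b • (cos φ • e + sin φ • f) ∈ s)
    (hconst : ∀ φ : ℝ, h (p + b • (cos φ • e + sin φ • f)) = h (p + b • e)) :
    b * (b * fderiv ℝ (fderiv ℝ h) (p + b • e) f f) = b * fderiv ℝ h (p + b • e) e := by
  have hc : ∀ t : ℝ, HasDerivAt (fun φ : ℝ => p + b • (cos φ • e + sin φ • f))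
      (b • (-sin t • e + cos t • f)) t := fun t =>
    ((((Real.hasDerivAt_cos t).smul_const e).add
      ((Real.hasDerivAt_sin t).smul_const f)).const_smul b).const_add p
  have hv : HasDerivAt (fun t : ℝ => b • (-sin t • e + cos t • f))
      (b • (-cos 0 • e + -sin 0 • f)) 0 :=
    ((((Real.hasDerivAt_sin 0).neg).smul_const e).add
      ((Real.hasDerivAt_cos 0).smul_const f)).const_smul b
  have h1 : ∀ t : ℝ, fderiv ℝ h (p + b • (cos t • e + sin t • f))
      (b • (-sin t • e + cos t • f)) = 0 := by
    intro t
    have a1 := cv1_aux hs hC (hmem t) (hc t)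
    refine a1.unique ?_
    simp only [hconst]
    exact hasDerivAt_const _ _
  have a1 := cv2_aux hs hC (hmem 0) (hc 0) hv
  simp only [h1] at a1
  have a2 := a1.unique (hasDerivAt_const _ _)
  simp at a2
  linarith

end helpers

lemma x1_eq {m : ℕ} (x : EuclideanSpace ℝ (Fin (m + 2))) : x1 x = x 0 := by
  simp [x1]

lemma isOpen_half (m : ℕ) : IsOpen (halfSpace (m + 2)) := by
  have : Continuous (fun x : EuclideanSpace ℝ (Fin (m + 2)) => x 0) := by fun_prop
  simpa [halfSpace, x1_eq] using isOpen_lt continuous_const this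

lemma norm_comb {m : ℕ} (j : Fin m) (a b c : ℝ) :
    ‖a • EuclideanSpace.single (0 : Fin (m + 2)) (1 : ℝ) + (b • EuclideanSpace.single 1 (1 : ℝ)
      + c • EuclideanSpace.single j.succ.succ (1 : ℝ))‖ ^ 2 = a ^ 2 + b ^ 2 + c ^ 2 := by
  have e1 : (1 : Fin (m + 2)) = Fin.succ 0 := rfl
  have h1 : (1 : Fin (m + 2)) ≠ j.succ.succ := by
    rw [e1]; intro h; exact Fin.succ_ne_zero j (Fin.succ_injective _ h).symm
  have h2 : j.succ.succ ≠ (0 : Fin (m + 2)) := Fin.succ_ne_zero _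
  rw [EuclideanSpace.norm_sq_eq, Fin.sum_univ_succ, Fin.sum_univ_succ,
    Finset.sum_eq_single j]
  · simp [← e1, h1, h1.symm, h2, h2.symm]; ring
  · intro k _ hk
    have h3 : (1 : Fin (m + 2)) ≠ k.succ.succ := by
      rw [e1]; intro h; exact Fin.succ_ne_zero k (Fin.succ_injective _ h).symm
    simp [h3.symm, hk, Fin.succ_ne_zero]
  · simp

lemma norm_comb2 {m : ℕ} (a b : ℝ) :
    ‖a • EuclideanSpace.single (0 : Fin (m + 2)) (1 : ℝ) + b • EuclideanSpace.single 1 (1 : ℝ)‖ ^ 2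
      = a ^ 2 + b ^ 2 := by
  have e1 : (1 : Fin (m + 2)) = Fin.succ 0 := rfl
  rw [EuclideanSpace.norm_sq_eq, Fin.sum_univ_succ, Fin.sum_univ_succ, Finset.sum_eq_zero]
  · simp [← e1]
  · intro k _
    have h3 : (1 : Fin (m + 2)) ≠ k.succ.succ := by
      rw [e1]; intro h; exact Fin.succ_ne_zero k (Fin.succ_injective _ h).symm
    simp [h3.symm, Fin.succ_ne_zero]
/-- a positive, axially symmetric, homogeneous `L_μ`-harmonic in the
class `H_{μ,0}` is a positive multiple of either `x₁^{α₊}` or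
`x₁^{α₊}|x|^{−(n−2+2α₊)}`. -/
theorem stmt6 (n : ℕ) (hn : 2 ≤ n) (μ γ : ℝ) (hμ : μ < 1 / 4)
    (h : EuclideanSpace ℝ (Fin n) → ℝ)
    (hC2 : ContDiffOn ℝ 2 h (halfSpace n))
    (hpos : ∀ x ∈ halfSpace n, 0 < h x)
    (hharm : ∀ x ∈ halfSpace n, lap h x + (μ / (x1 x) ^ 2) * h x = 0)
    (haxial : ∀ x ∈ halfSpace n, ∀ y ∈ halfSpace n, x1 x = x1 y → ‖x‖ = ‖y‖ → h x = h y)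
    (hhom : ∀ l : ℝ, 0 < l → ∀ x ∈ halfSpace n, h (l • x) = l ^ γ * h x)
    (hclass : ∀ R > (1 : ℝ), ∃ c > (0 : ℝ), ∃ δ > (0 : ℝ), ∀ x ∈ halfSpace n,
      R⁻¹ ≤ ‖x‖ → ‖x‖ ≤ R → x1 x < δ →
      c⁻¹ * x1 x ^ aPlus μ ≤ h x ∧ h x ≤ c * x1 x ^ aPlus μ) :
    ∃ l > (0 : ℝ),
      (∀ x ∈ halfSpace n, h x = l * x1 x ^ aPlus μ) ∨
      (∀ x ∈ halfSpace n, h x = l * x1 x ^ aPlus μ * ‖x‖ ^ (-((n : ℝ) - 2 + 2 * aPlus μ))) := by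
  obtain ⟨m, rfl⟩ : ∃ m, n = m + 2 := ⟨n - 2, by omega⟩
  have hpi := Real.pi_pos
  have hS := isOpen_half m
  set e0 : EuclideanSpace ℝ (Fin (m + 2)) := EuclideanSpace.single 0 1 with he0
  set e1 : EuclideanSpace ℝ (Fin (m + 2)) := EuclideanSpace.single 1 1 with he1
  set α := aPlus μ with hαdef
  have hsq : 0 < Real.sqrt (1 / 4 - μ) := Real.sqrt_pos.2 (by linarith)
  have hα : 1 / 2 < α := by simp only [hαdef, aPlus]; linarith
  have hα2 : α ^ 2 - α + μ = 0 := by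
    have := Real.sq_sqrt (show (0 : ℝ) ≤ 1 / 4 - μ by linarith)
    simp only [hαdef, aPlus]; nlinarith
  have hcone : ∀ l : ℝ, 0 < l → ∀ x ∈ halfSpace (m + 2), l • x ∈ halfSpace (m + 2) := by
    intro l hl x hx
    simp only [halfSpace, mem_setOf_eq, x1_eq] at hx ⊢
    simpa using mul_pos hl hx
  let c : ℝ → EuclideanSpace ℝ (Fin (m + 2)) := fun θ => cos θ • e0 + sin θ • e1
  let v : ℝ → EuclideanSpace ℝ (Fin (m + 2)) := fun θ => -sin θ • e0 + cos θ • e1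
  have hcx : ∀ θ, x1 (c θ) = cos θ := by
    intro θ; simp [x1_eq, c, he0, he1]
  have hcn : ∀ θ, ‖c θ‖ = 1 := by
    intro θ
    have := norm_comb2 (m := m) (cos θ) (sin θ)
    rw [Real.cos_sq_add_sin_sq] at this
    exact (pow_eq_one_iff_of_nonneg (norm_nonneg _) two_ne_zero).1 this
  have hcmem : ∀ θ ∈ Ioo (-(π / 2)) (π / 2), c θ ∈ halfSpace (m + 2) := by
    intro θ hθ
    simp only [halfSpace, mem_setOf_eq, hcx]
    exact Real.cos_pos_of_mem_Ioo hθ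
  have hsub : ∀ θ ∈ Ico 0 (π / 2), θ ∈ Ioo (-(π / 2)) (π / 2) := fun θ hθ =>
    ⟨by linarith [hθ.1], hθ.2⟩
  have hsub2 : ∀ θ ∈ Ioo 0 (π / 2), θ ∈ Ioo (-(π / 2)) (π / 2) := fun θ hθ =>
    ⟨by linarith [hθ.1], hθ.2⟩
  have hcd : ∀ θ, HasDerivAt c (v θ) θ := fun t =>
    ((Real.hasDerivAt_cos t).smul_const e0).add ((Real.hasDerivAt_sin t).smul_const e1)
  have hvd : ∀ θ, HasDerivAt v (-c θ) θ := by
    intro t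
    refine ((((Real.hasDerivAt_sin t).neg).smul_const e0).add
      ((Real.hasDerivAt_cos t).smul_const e1)).congr_deriv ?_
    simp only [c]; module
  have hu : ∀ θ ∈ Ioo (-(π / 2)) (π / 2),
      HasDerivAt (fun θ => h (c θ)) (fderiv ℝ h (c θ) (v θ)) θ := fun θ hθ =>
    cv1_aux hS hC2 (hcmem θ hθ) (hcd θ)
  have hu' : ∀ θ ∈ Ioo (-(π / 2)) (π / 2),
      HasDerivAt (fun θ => fderiv ℝ h (c θ) (v θ))
        (fderiv ℝ (fderiv ℝ h) (c θ) (v θ) (v θ) + fderiv ℝ h (c θ) (-c θ)) θ := fun θ hθ =>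
    cv2_aux hS hC2 (hcmem θ hθ) (hcd θ) (hvd θ)
  have h0 : fderiv ℝ h (c 0) (v 0) = 0 := by
    have h00 : (0 : ℝ) ∈ Ioo (-(π / 2)) (π / 2) := ⟨by linarith, by linarith⟩
    have a1 := hu 0 h00
    have a2 : HasDerivAt (fun θ => h (c (-θ))) (fderiv ℝ h (c 0) (-v 0)) 0 := by
      have := cv1_aux hS hC2 (c := fun θ => c (-θ)) (t := 0) (v := -v 0)
        (by simpa using hcmem 0 h00) (by
          have h1 : HasDerivAt c (v 0) (-0) := by simpa using hcd 0
          exact (h1.scomp (0 : ℝ) (hasDerivAt_neg (0 : ℝ))).congr_deriv (by simp))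
      simpa using this
    have a3 := a1.unique (a2.congr_of_eventuallyEq (by
      filter_upwards [isOpen_Ioo.mem_nhds h00] with θ hθ
      exact haxial _ (hcmem θ hθ) _ (hcmem (-θ) ⟨by linarith [hθ.2], by linarith [hθ.1]⟩)
        (by rw [hcx, hcx, Real.cos_neg]) (by rw [hcn, hcn])))
    rw [map_neg] at a3
    linarith
  have hode : ∀ θ ∈ Ioo 0 (π / 2),
      (fderiv ℝ (fderiv ℝ h) (c θ) (v θ) (v θ) + fderiv ℝ h (c θ) (-c θ)) * sin θ
      + m * cos θ * fderiv ℝ h (c θ) (v θ) + γ * (γ + m) * sin θ * h (c θ)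
      + μ / (cos θ) ^ 2 * sin θ * h (c θ) = 0 := by
    intro θ hθ
    have hs : 0 < sin θ := Real.sin_pos_of_pos_of_lt_pi hθ.1 (by linarith [hθ.2])
    have hmem := hcmem θ (hsub2 θ hθ)
    have hcos : 0 < cos θ := Real.cos_pos_of_mem_Ioo (hsub2 θ hθ)
    obtain ⟨r1, r2⟩ := hom_aux hS hC2 hcone γ hhom hmem
    have hsc := Real.sin_sq_add_cos_sq θ
    have hE0 : e0 = cos θ • c θ - sin θ • v θ := by
      simp only [c, v]
      calc e0 = (sin θ ^ 2 + cos θ ^ 2) • e0 := by rw [hsc, one_smul]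
        _ = _ := by module
    have hE1 : e1 = sin θ • c θ + cos θ • v θ := by
      simp only [c, v]
      calc e1 = (sin θ ^ 2 + cos θ ^ 2) • e1 := by rw [hsc, one_smul]
        _ = _ := by module
    have hj : ∀ j : Fin m, sin θ * fderiv ℝ (fderiv ℝ h) (c θ)
        (EuclideanSpace.single j.succ.succ 1) (EuclideanSpace.single j.succ.succ 1)
        = sin θ * γ * h (c θ) + cos θ * fderiv ℝ h (c θ) (v θ) := by
      intro j
      have hx : ∀ φ : ℝ, x1 (cos θ • e0 + sin θ • (cos φ • e1 + sin φ •
          EuclideanSpace.single j.succ.succ (1 : ℝ))) = cos θ := by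
        intro φ
        simp [x1_eq, he0, he1, Fin.succ_ne_zero, (Fin.succ_ne_zero _).symm]
      have hn' : ∀ φ : ℝ, ‖cos θ • e0 + sin θ • (cos φ • e1 + sin φ •
          EuclideanSpace.single j.succ.succ (1 : ℝ))‖ = 1 := by
        intro φ
        have := norm_comb j (cos θ) (sin θ * cos φ) (sin θ * sin φ)
        rw [show cos θ ^ 2 + (sin θ * cos φ) ^ 2 + (sin θ * sin φ) ^ 2 = 1 by
          rw [mul_pow, mul_pow, add_assoc, ← mul_add, Real.cos_sq_add_sin_sq, mul_one,
            Real.cos_sq_add_sin_sq]] at this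
        rw [smul_add, smul_smul, smul_smul]
        exact (pow_eq_one_iff_of_nonneg (norm_nonneg _) two_ne_zero).1 this
      have hm : ∀ φ : ℝ, cos θ • e0 + sin θ • (cos φ • e1 + sin φ •
          EuclideanSpace.single j.succ.succ (1 : ℝ)) ∈ halfSpace (m + 2) := by
        intro φ
        simp only [halfSpace, mem_setOf_eq, hx]
        exact hcos
      have key := circ_aux hS hC2 (cos θ • e0) e1 (EuclideanSpace.single j.succ.succ (1 : ℝ))
        (sin θ) hm (fun φ => haxial _ (hm φ) _ hmem (by rw [hx]; exact (hcx θ).symm)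
          (by rw [hn']; exact (hcn θ).symm))
      have key2 := mul_left_cancel₀ hs.ne' key
      refine key2.trans ?_
      change fderiv ℝ h (c θ) e1 = _
      rw [hE1, map_add, map_smul, map_smul, r1]
      simp only [smul_eq_mul]
      ring
    have hL := hharm _ hmem
    rw [hcx] at hL
    have hlap : sin θ * lap h (c θ) = sin θ * (fderiv ℝ (fderiv ℝ h) (c θ) (c θ) (c θ)
        + fderiv ℝ (fderiv ℝ h) (c θ) (v θ) (v θ))
        + m * (sin θ * γ * h (c θ) + cos θ * fderiv ℝ h (c θ) (v θ)) := by
      simp only [lap, iteratedFDeriv_two_apply]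
      rw [Fin.sum_univ_succ, Fin.sum_univ_succ, mul_add, mul_add, Finset.mul_sum]
      simp only [Matrix.cons_val_zero, Matrix.cons_val_one, hj]
      rw [Finset.sum_const, Finset.card_univ, Fintype.card_fin, nsmul_eq_mul, ← add_assoc]
      congr 1
      rw [← mul_add]
      congr 1
      change fderiv ℝ (fderiv ℝ h) (c θ) e0 e0 + fderiv ℝ (fderiv ℝ h) (c θ) e1 e1 = _
      rw [hE0, hE1]
      simp only [map_add, map_sub, map_smul, ContinuousLinearMap.add_apply,
        ContinuousLinearMap.sub_apply, ContinuousLinearMap.smul_apply, smul_eq_mul]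
      linear_combination (fderiv ℝ (fderiv ℝ h) (c θ) (c θ) (c θ)
        + fderiv ℝ (fderiv ℝ h) (c θ) (v θ) (v θ)) * hsc
    rw [r2] at hlap
    rw [map_neg, r1]
    linear_combination sin θ * hL - hlap
  obtain ⟨cc, hcc, δ, hδ, hb⟩ := hclass 2 (by norm_num)
  obtain ⟨hγ, C, hC, hres⟩ := ode_aux m μ γ α hα hα2 (fun θ => h (c θ))
    (fun θ => fderiv ℝ h (c θ) (v θ))
    (fun θ => fderiv ℝ (fderiv ℝ h) (c θ) (v θ) (v θ) + fderiv ℝ h (c θ) (-c θ))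
    (fun θ hθ => hu θ (hsub θ hθ)) (fun θ hθ => hu' θ (hsub θ hθ)) h0
    (fun θ hθ => hpos _ (hcmem θ (hsub θ hθ))) hode
    ⟨cc, δ, hδ, fun θ hθ hlt => by
      have := (hb (c θ) (hcmem θ (hsub2 θ hθ)) (by rw [hcn]; norm_num) (by rw [hcn]; norm_num)
        (by rw [hcx]; exact hlt)).2
      rwa [hcx] at this⟩
  have hfin : ∀ x ∈ halfSpace (m + 2), 0 < ‖x‖ ∧ 0 < x1 x ∧
      h x = C * x1 x ^ α * ‖x‖ ^ (γ - α) := by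
    intro x hx
    have hx1 : 0 < x1 x := hx
    have hle : x1 x ≤ ‖x‖ := by
      rw [x1_eq]
      exact (le_abs_self _).trans (by simpa using PiLp.norm_apply_le x 0)
    have hr : 0 < ‖x‖ := hx1.trans_le hle
    refine ⟨hr, hx1, ?_⟩
    set t := x1 x / ‖x‖ with ht
    have ht0 : 0 < t := div_pos hx1 hr
    have ht1 : t ≤ 1 := (div_le_one hr).2 hle
    have hθ : Real.arccos t ∈ Ico 0 (π / 2) :=
      ⟨Real.arccos_nonneg t, Real.arccos_lt_pi_div_two.2 ht0⟩
    have hcost : cos (Real.arccos t) = t := Real.cos_arccos (by linarith) ht1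
    have hy : h (‖x‖⁻¹ • x) = h (c (Real.arccos t)) := by
      refine haxial _ (hcone _ (inv_pos.2 hr) x hx) _ (hcmem _ (hsub _ hθ)) ?_ ?_
      · rw [hcx, hcost, ht, x1_eq, x1_eq]; simp; ring
      · rw [hcn, norm_smul, norm_inv, norm_norm, inv_mul_cancel₀ hr.ne']
    have hxx : h x = ‖x‖ ^ γ * h (‖x‖⁻¹ • x) := by
      rw [← hhom _ hr _ (hcone _ (inv_pos.2 hr) x hx), smul_smul, mul_inv_cancel₀ hr.ne', one_smul]
    have hr2 := hres _ hθ
    rw [hxx, hy, hr2, hcost, ht, Real.div_rpow hx1.le hr.le, Real.rpow_sub hr]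
    field_simp
  refine ⟨C, hC, ?_⟩
  rcases hγ with hγ | hγ
  · left
    intro x hx
    rw [(hfin x hx).2.2, hγ, sub_self, Real.rpow_zero, mul_one]
  · right
    intro x hx
    rw [(hfin x hx).2.2, hγ]
    congr 2
    push_cast
    ring
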